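/- (Lemma 10, part 2: likelihood ratio on the typical set.) Let X, Y be finite alphabets and let G = (g_{y|x}), P = (p_{y|x}) be stochastic matrices with the property that g_{y|x} > 0 implies p_{y|x} > 0. Fix epsilon_1, epsilon_2 > 0, a string x in X^d with type r(x), and any y in the conditionally typical set J_x^{epsilon_1, epsilon_2} (in particular with prod_t g_{y_t|x_t} > 0). Then prod_{t=1}^d p_{y_t|x_t} / prod_{t=1}^d g_{y_t|x_t} >= exp( -d [ D(G||P | r(x)) + (2 epsilon_2 + epsilon_1) * S ] ), where S = sum over pairs (x,y) with n_x(x) != 0 and g_{y|x} != 0 of |ln(g_{y|x}/p_{y|x})|. Consequently the ratio is also at least exp(-d [ max_r D(G||P|r) + (2 epsilon_2 + epsilon_1) S ]), the maximum taken over probability vectors r on X. -/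

import Mathlib

open scoped BigOperators Classical

noncomputable section

/-- `G` is a stochastic matrix. -/
def IsStochastic {X Y : Type} [Fintype X] [Fintype Y] (P : X → Y → ℝ) : Prop :=
  ∀ x, (∀ y, 0 ≤ P x y) ∧ ∑ y, P x y = 1

/-- `r` is a probability vector. -/
def IsProbVec {X : Type} [Fintype X] (q : X → ℝ) : Prop :=
  (∀ x, 0 ≤ q x) ∧ ∑ x, q x = 1

/-- Count `n_x(x̄)` of positions of the string `x̄` equal to the letter `a`. -/
def nxCount {X : Type} [Fintype X] [DecidableEq X] {d : ℕ} (x : Fin d → X) (a : X) : ℕ :=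
  (Finset.univ.filter fun t => x t = a).card

/-- Joint count `n_{x,y}(x̄,ȳ)` of positions `t` with `(x̄ t, ȳ t) = (a,b)`. -/
def nxyCount {X Y : Type} [Fintype X] [Fintype Y] [DecidableEq X] [DecidableEq Y]
    {d : ℕ} (x : Fin d → X) (y : Fin d → Y) (a : X) (b : Y) : ℕ :=
  (Finset.univ.filter fun t => x t = a ∧ y t = b).card

/-- The empirical distribution (type) of a string `x ∈ X^d`. -/
def empDist {X : Type} [Fintype X] [DecidableEq X] {d : ℕ} (x : Fin d → X) : X → ℝ :=
  fun a => ((nxCount x a : ℝ)) / d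

/-- The conditional divergence `D(G‖P|r)`. -/
def condDiv {X Y : Type} [Fintype X] [Fintype Y] (G P : X → Y → ℝ) (r : X → ℝ) : ℝ :=
  ∑ x, r x * ∑ y, G x y * Real.log (G x y / P x y)

/-- The conditionally typical set `J_x^{ε₁,ε₂}`. -/
def CondTypical {X Y : Type} [Fintype X] [Fintype Y] [DecidableEq X] [DecidableEq Y]
    (G : X → Y → ℝ) (ε1 ε2 : ℝ) {d : ℕ} (x : Fin d → X) (y : Fin d → Y) : Prop :=
  ∀ a : X, ((nxCount x a : ℝ) / d < ε2) ∨
    ∀ b : Y, (nxyCount x y a b : ℝ) / (nxCount x a) ∈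
      Set.Ioo (G a b - ε1) (G a b + ε1)

lemma nxyCount_le_nxCount {X Y : Type} [Fintype X] [Fintype Y] [DecidableEq X] [DecidableEq Y]
    {d : ℕ} (x : Fin d → X) (y : Fin d → Y) (a : X) (b : Y) :
    nxyCount x y a b ≤ nxCount x a := by
  unfold nxyCount nxCount
  refine Finset.card_le_card fun t ht => ?_
  simp only [Finset.mem_filter, Finset.mem_univ, true_and] at ht ⊢
  exact ht.1

lemma nxCount_le_length {X : Type} [Fintype X] [DecidableEq X] {d : ℕ} (x : Fin d → X) (a : X) :
    nxCount x a ≤ d := by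
  unfold nxCount
  exact (Finset.card_le_univ _).trans_eq (Fintype.card_fin d)

lemma sum_nxCount {X : Type} [Fintype X] [DecidableEq X] {d : ℕ} (x : Fin d → X) :
    ∑ a, nxCount x a = d := by
  unfold nxCount
  rw [← Finset.card_eq_sum_card_fiberwise fun t _ => Finset.mem_coe.2 (Finset.mem_univ (x t))]
  simp

lemma sum_comp_eq_sum_nxyCount {X Y : Type} [Fintype X] [Fintype Y] [DecidableEq X]
    [DecidableEq Y] {d : ℕ} (x : Fin d → X) (y : Fin d → Y) (f : X → Y → ℝ) :
    ∑ t, f (x t) (y t) = ∑ a, ∑ b, (nxyCount x y a b : ℝ) * f a b := by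
  have hcount : ∀ a b, (nxyCount x y a b : ℝ) * f a b =
      ∑ t, if y t = b then (if x t = a then f a b else 0) else 0 := by
    intro a b
    rw [nxyCount, ← nsmul_eq_mul, ← Finset.sum_const, Finset.sum_filter]
    refine Finset.sum_congr rfl fun t _ => ?_
    by_cases h₁ : x t = a <;> by_cases h₂ : y t = b <;> simp [h₁, h₂]
  simp_rw [hcount]
  have hswap : ∀ a, (∑ b, ∑ t, if y t = b then (if x t = a then f a b else 0) else 0) =
      ∑ t, if x t = a then f a (y t) else 0 := by
    intro a
    rw [Finset.sum_comm]
    exact Finset.sum_congr rfl fun t _ => by simp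
  simp_rw [hswap]
  rw [Finset.sum_comm]
  exact Finset.sum_congr rfl fun t _ => by simp

lemma isProbVec_empDist {X : Type} [Fintype X] [DecidableEq X] {d : ℕ} (hd : d ≠ 0)
    (x : Fin d → X) : IsProbVec (empDist x) := by
  refine ⟨fun a => by unfold empDist; positivity, ?_⟩
  unfold empDist
  rw [← Finset.sum_div, ← Nat.cast_sum, sum_nxCount]
  exact div_self (Nat.cast_ne_zero.2 hd)

lemma bddAbove_condDiv {X Y : Type} [Fintype X] [Fintype Y] (G P : X → Y → ℝ) :
    BddAbove {v | ∃ r : X → ℝ, IsProbVec r ∧ v = condDiv G P r} := by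
  refine ⟨∑ a, |∑ b, G a b * Real.log (G a b / P a b)|, ?_⟩
  rintro v ⟨r, ⟨hr₀, hr₁⟩, rfl⟩
  unfold condDiv
  refine Finset.sum_le_sum fun a _ => ?_
  have hra : r a ≤ 1 := hr₁ ▸ Finset.single_le_sum (fun i _ => hr₀ i) (Finset.mem_univ a)
  exact (mul_le_mul_of_nonneg_left (le_abs_self _) (hr₀ a)).trans
    (mul_le_of_le_one_left (abs_nonneg _) hra)

/-- On the conditionally typical set, joint counts deviate from their means by at most
`d (2 ε₂ + ε₁)`. -/
lemma CondTypical.abs_nxyCount_sub_le {X Y : Type} [Fintype X] [Fintype Y] [DecidableEq X]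
    [DecidableEq Y] {G : X → Y → ℝ} (hG : IsStochastic G) {ε1 ε2 : ℝ} (hε1 : 0 < ε1)
    (hε2 : 0 < ε2) {d : ℕ} {x : Fin d → X} {y : Fin d → Y} (hy : CondTypical G ε1 ε2 x y)
    {a : X} (ha : nxCount x a ≠ 0) (b : Y) :
    |(nxyCount x y a b : ℝ) - nxCount x a * G a b| ≤ d * (2 * ε2 + ε1) := by
  have hn : (0 : ℝ) < nxCount x a := Nat.cast_pos.2 (Nat.pos_of_ne_zero ha)
  have hnd : (nxCount x a : ℝ) ≤ d := Nat.cast_le.2 (nxCount_le_length x a)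
  have hd : (0 : ℝ) < d := hn.trans_le hnd
  have hdε1 := mul_pos hd hε1
  have hdε2 := mul_pos hd hε2
  rcases hy a with h | h
  · rw [div_lt_iff₀ hd] at h
    have hxy : (nxyCount x y a b : ℝ) ≤ nxCount x a := Nat.cast_le.2 (nxyCount_le_nxCount x y a b)
    have hxy₀ : (0 : ℝ) ≤ nxyCount x y a b := Nat.cast_nonneg _
    have hG₀ := (hG a).1 b
    have hG₁ : G a b ≤ 1 :=
      (hG a).2 ▸ Finset.single_le_sum (fun i _ => (hG a).1 i) (Finset.mem_univ b)
    have hm₀ := mul_nonneg hn.le hG₀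
    have hm₁ := mul_le_of_le_one_right hn.le hG₁
    rw [abs_le]
    constructor <;> linarith
  · obtain ⟨h₁, h₂⟩ := h b
    rw [lt_div_iff₀ hn] at h₁
    rw [div_lt_iff₀ hn] at h₂
    have hnε := mul_le_mul_of_nonneg_right hnd hε1.le
    rw [abs_le]
    constructor <;> linarith

lemma sum_log_ratio_le {X Y : Type} [Fintype X] [Fintype Y] [DecidableEq X] [DecidableEq Y]
    {G : X → Y → ℝ} (P : X → Y → ℝ) (hG : IsStochastic G) {ε1 ε2 : ℝ} (hε1 : 0 < ε1)
    (hε2 : 0 < ε2) {d : ℕ} {x : Fin d → X} {y : Fin d → Y} (hy : CondTypical G ε1 ε2 x y) :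
    ∑ t, Real.log (G (x t) (y t) / P (x t) (y t)) ≤
      d * (condDiv G P (empDist x) + (2 * ε2 + ε1) * ∑ a : X, ∑ b : Y,
        (if nxCount x a ≠ 0 ∧ G a b ≠ 0 then |Real.log (G a b / P a b)| else 0)) := by
  rw [sum_comp_eq_sum_nxyCount x y fun a b => Real.log (G a b / P a b), condDiv, mul_add]
  simp only [Finset.mul_sum, ← Finset.sum_add_distrib]
  refine Finset.sum_le_sum fun a _ => Finset.sum_le_sum fun b _ => ?_
  by_cases ha : nxCount x a = 0
  · have hxy : nxyCount x y a b = 0 := Nat.le_zero.1 (ha ▸ nxyCount_le_nxCount x y a b)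
    simp [ha, hxy, empDist]
  by_cases hg : G a b = 0
  · simp [hg]
  have hd : (d : ℝ) ≠ 0 :=
    Nat.cast_ne_zero.2 ((Nat.pos_of_ne_zero ha).trans_le (nxCount_le_length x a)).ne'
  have hdev := mul_le_mul_of_nonneg_right (hy.abs_nxyCount_sub_le hG hε1 hε2 ha b)
    (abs_nonneg (Real.log (G a b / P a b)))
  rw [← abs_mul] at hdev
  have hle := (le_abs_self _).trans hdev
  rw [if_pos ⟨ha, hg⟩, empDist, ← mul_assoc (d : ℝ) (_ / _), mul_div_cancel₀ _ hd]
  linarith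

/-- **Lemma 10, part 2 (likelihood ratio on the typical set).**  Let `G, P` be
stochastic matrices with `g_{y|x} > 0 → p_{y|x} > 0`, `ε₁, ε₂ > 0`, `x̄ ∈ X^d` with
type `r(x̄)`, and `ȳ` conditionally typical for `x̄` with `∏_t g_{ȳ_t|x̄_t} > 0`.
Then the likelihood ratio `∏_t p_{ȳ_t|x̄_t} / ∏_t g_{ȳ_t|x̄_t}` is at least
`exp(-d[D(G‖P|r(x̄)) + (2ε₂+ε₁)S])`, where
`S = ∑_{(a,b) : n_a ≠ 0, g_{b|a} ≠ 0} |ln(g_{b|a}/p_{b|a})|`; consequently it is also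
at least `exp(-d[max_r D(G‖P|r) + (2ε₂+ε₁)S])`, the maximum over probability
vectors `r`. -/
theorem typical_likelihood_ratio
    {X Y : Type} [Fintype X] [Fintype Y] [DecidableEq X] [DecidableEq Y]
    (G P : X → Y → ℝ) (hG : IsStochastic G) (hP : IsStochastic P)
    (habs : ∀ x y, 0 < G x y → 0 < P x y)
    (ε1 ε2 : ℝ) (hε1 : 0 < ε1) (hε2 : 0 < ε2)
    {d : ℕ} (x : Fin d → X) (y : Fin d → Y)
    (hy : CondTypical G ε1 ε2 x y) (hpos : 0 < ∏ t, G (x t) (y t))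
    (S : ℝ)
    (hS : S = ∑ a : X, ∑ b : Y,
      (if nxCount x a ≠ 0 ∧ G a b ≠ 0 then |Real.log (G a b / P a b)| else 0)) :
    Real.exp (-(d : ℝ) * (condDiv G P (empDist x) + (2 * ε2 + ε1) * S)) ≤
      (∏ t, P (x t) (y t)) / (∏ t, G (x t) (y t)) ∧
    Real.exp (-(d : ℝ) * (sSup {v | ∃ r : X → ℝ, IsProbVec r ∧ v = condDiv G P r}
        + (2 * ε2 + ε1) * S)) ≤
      (∏ t, P (x t) (y t)) / (∏ t, G (x t) (y t)) := by
  have hG_ne : ∀ t, G (x t) (y t) ≠ 0 := fun t =>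
    Finset.prod_ne_zero_iff.1 hpos.ne' t (Finset.mem_univ t)
  have hG_pos : ∀ t, 0 < G (x t) (y t) := fun t => ((hG _).1 _).lt_of_ne' (hG_ne t)
  have hratio : (∏ t, P (x t) (y t)) / (∏ t, G (x t) (y t)) =
      Real.exp (-∑ t, Real.log (G (x t) (y t) / P (x t) (y t))) := by
    rw [← Finset.prod_div_distrib, ← Finset.sum_neg_distrib, Real.exp_sum]
    refine Finset.prod_congr rfl fun t _ => ?_
    rw [← Real.log_inv, inv_div, Real.exp_log (div_pos (habs _ _ (hG_pos t)) (hG_pos t))]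
  have hmain := sum_log_ratio_le P hG hε1 hε2 hy
  rw [← hS] at hmain
  rw [hratio, Real.exp_le_exp, Real.exp_le_exp, neg_mul, neg_mul, neg_le_neg_iff, neg_le_neg_iff]
  refine ⟨hmain, hmain.trans ?_⟩
  rcases eq_or_ne d 0 with hd | hd
  · simp [hd]
  · gcongr
    exact le_csSup (bddAbove_condDiv G P) ⟨_, isProbVec_empDist hd x, rfl⟩

end
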